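/- arXiv:1012.4257 — 2 statements merged into one kernel-verified Lean document; each statement's English description precedes it below -/
import Mathlib

section
/- For every integer n ≥ 1, the quotient ring ℂ[x₁,x₂]/(h_{2n}(x₁,x₂), h_n(x₁²,x₂²) − 1) is a semisimple ring. -/
/-- The complete homogeneous symmetric function `h_r(y₁,y₂) = ∑_{i=0}^r y₁^i y₂^{r−i}`. -/
def hc {R : Type*} [CommRing R] (r : ℕ) (y₁ y₂ : R) : R :=
  ∑ i ∈ Finset.range (r + 1), y₁ ^ i * y₂ ^ (r - i)

theorem aux_coprime (n : ℕ) (hn : 1 ≤ n) :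
    (((Polynomial.X ^ (2*n) - 1) ^ (2*n+1) - 1 : Polynomial ℂ)).Separable := by
  set v : Polynomial ℂ := Polynomial.X ^ (2*n) - 1 with hv
  have h1 : IsCoprime (v ^ (2*n+1) - 1) v := ⟨-1, v ^ (2*n), by ring⟩
  have h2 : IsCoprime (v ^ (2*n+1) - 1) (Polynomial.X : Polynomial ℂ) := by
    have hd : (Polynomial.X : Polynomial ℂ) ∣ v ^ (2*n+1) + 1 := by
      have : v + 1 ∣ v ^ (2*n+1) + 1 ^ (2*n+1) := Odd.add_dvd_pow_add_pow v 1 ⟨n, rfl⟩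
      rw [one_pow] at this
      refine dvd_trans ?_ this
      rw [hv, sub_add_cancel]
      exact dvd_pow_self _ (by omega)
    obtain ⟨w, hw⟩ := hd
    refine ⟨- Polynomial.C (1/2), Polynomial.C (1/2) * w, ?_⟩
    have h3 : (Polynomial.C (1/2) : Polynomial ℂ) * 2 = 1 := by
      rw [show (2 : Polynomial ℂ) = Polynomial.C 2 from rfl, ← Polynomial.C_mul]
      norm_num
    linear_combination (-Polynomial.C (1/2)) * hw + h3
  have hder : Polynomial.derivative (v ^ (2*n+1) - 1) =
      Polynomial.C ((2*n+1 : ℂ) * (2*n)) * (v ^ (2*n) * Polynomial.X ^ (2*n-1)) := by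
    simp [hv, Polynomial.derivative_pow]
    ring
  rw [Polynomial.Separable, hder]
  have hn0 : (n:ℂ) ≠ 0 := by exact_mod_cast (by omega : n ≠ 0)
  have h20 : (2*n+1:ℂ) ≠ 0 := by exact_mod_cast (by omega : 2*n+1 ≠ 0)
  have hu : IsUnit (Polynomial.C ((2*n+1 : ℂ) * (2*n))) := by
    rw [Polynomial.isUnit_C, isUnit_iff_ne_zero]
    exact mul_ne_zero h20 (mul_ne_zero two_ne_zero hn0)
  rw [isCoprime_mul_unit_left_right hu]
  exact h1.pow_right.mul_right h2.pow_right

theorem hc_mul {R : Type*} [CommRing R] (r : ℕ) (x y : R) :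
    hc r x y * (x - y) = x ^ (r+1) - y ^ (r+1) := by
  have := (Commute.all x y).geom_sum₂_mul (r+1)
  simpa [hc] using this

theorem aux_rel {A : Type*} [CommRing A] [Algebra ℂ A] (n : ℕ) (hn : 1 ≤ n) (x y : A)
    (h1 : hc (2*n) x y = 0) (h2 : hc n (x^2) (y^2) - 1 = 0) :
    x = y ^ (2*n+1) - y ∧ (y ^ (2*n) - 1) ^ (2*n+1) - 1 = 0 := by
  have key : ∀ I : Ideal A, Ideal.Quotient.mk I x = Ideal.Quotient.mk I y → I = ⊤ := by
    intro I hI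
    have e1 := congrArg (Ideal.Quotient.mk I) h1
    have e2 := congrArg (Ideal.Quotient.mk I) h2
    simp only [hc, map_sum, map_mul, map_pow, map_sub, map_one, map_zero, hI] at e1 e2
    rw [Finset.sum_congr rfl (g := fun _ => (Ideal.Quotient.mk I y)^(2*n))] at e1
    swap
    · intro i hi
      rw [← pow_add]; congr 1; have := Finset.mem_range.1 hi; omega
    rw [Finset.sum_congr rfl (g := fun _ => (Ideal.Quotient.mk I y)^(2*n))] at e2
    swap
    · intro i hi
      rw [← pow_mul, ← pow_mul, ← pow_add]; congr 1; have := Finset.mem_range.1 hi; omega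
    simp only [Finset.sum_const, Finset.card_range, nsmul_eq_mul] at e1 e2
    have hu : IsUnit ((2*n+1 : ℕ) : A ⧸ I) := by
      have : IsUnit ((2*n+1 : ℕ) : ℂ) := by
        rw [isUnit_iff_ne_zero]; exact_mod_cast (by omega : 2*n+1 ≠ 0)
      simpa only [map_natCast] using this.map (algebraMap ℂ (A ⧸ I))
    rw [hu.mul_right_eq_zero] at e1
    rw [e1] at e2
    rw [Ideal.eq_top_iff_one, ← Ideal.Quotient.eq_zero_iff_mem, map_one]
    linear_combination -e2
  have hxy : IsUnit (x - y) := by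
    rw [← Ideal.span_singleton_eq_top]
    apply key
    rw [Ideal.Quotient.eq]
    exact Ideal.mem_span_singleton_self _
  have p1 := hc_mul (2*n) x y
  have p2 := hc_mul n (x^2) (y^2)
  rw [h1] at p1
  rw [sub_eq_zero.1 h2] at p2
  have hx : x = y ^ (2*n+1) - y := by
    have : (x - y) * (x - (y ^ (2*n+1) - y)) = 0 := by
      linear_combination p2 + x * (-p1)
    rw [hxy.mul_right_eq_zero] at this
    exact sub_eq_zero.1 this
  refine ⟨hx, ?_⟩
  have hy : IsUnit y := by
    rw [← Ideal.span_singleton_eq_top]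
    apply key
    rw [Ideal.Quotient.eq]
    rw [Ideal.mem_span_singleton, hx]
    exact ⟨y^(2*n) - 2, by ring⟩
  have hz : y ^ (2*n+1) * ((y ^ (2*n) - 1) ^ (2*n+1) - 1) = 0 := by
    have : y ^ (2*n+1) * (y ^ (2*n) - 1) ^ (2*n+1) = x ^ (2*n+1) := by
      rw [← mul_pow]; congr 1; rw [hx]; ring
    linear_combination this - p1
  rwa [(hy.pow _).mul_right_eq_zero] at hz

theorem aux_ss (p : Polynomial ℂ) (hp : p.Separable) :
    IsSemisimpleRing (Polynomial ℂ ⧸ Ideal.span {p}) := by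
  have : Module.Finite ℂ (AdjoinRoot p) := (AdjoinRoot.powerBasis hp.ne_zero).finite
  have : Module.Finite ℂ (Polynomial ℂ ⧸ Ideal.span {p}) := this
  have : IsArtinianRing (Polynomial ℂ ⧸ Ideal.span {p}) := IsArtinianRing.of_finite ℂ _
  have : IsReduced (Polynomial ℂ ⧸ Ideal.span {p}) := by
    rw [← Ideal.isRadical_iff_quotient_reduced, ← isRadical_iff_span_singleton]
    exact hp.squarefree.isRadical
  exact IsArtinianRing.isSemisimpleRing_of_isReduced _

/-- For `n ≥ 1`, the quotient ring `ℂ[x₁,x₂]/(h_{2n}(x₁,x₂), h_n(x₁²,x₂²) − 1)` is a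
semisimple ring. -/
theorem stmt_9 (n : ℕ) (hn : 1 ≤ n) :
    IsSemisimpleRing
      (MvPolynomial (Fin 2) ℂ ⧸
        Ideal.span {hc (2 * n) (MvPolynomial.X 0 : MvPolynomial (Fin 2) ℂ) (MvPolynomial.X 1),
          hc n ((MvPolynomial.X 0 : MvPolynomial (Fin 2) ℂ) ^ 2) (MvPolynomial.X 1 ^ 2) - 1}) := by
  set I := Ideal.span {hc (2 * n) (MvPolynomial.X 0 : MvPolynomial (Fin 2) ℂ) (MvPolynomial.X 1),
          hc n ((MvPolynomial.X 0 : MvPolynomial (Fin 2) ℂ) ^ 2) (MvPolynomial.X 1 ^ 2) - 1} with hI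
  have h1 : hc (2*n) (Ideal.Quotient.mk I (MvPolynomial.X 0)) (Ideal.Quotient.mk I (MvPolynomial.X 1)) = 0 := by
    have : Ideal.Quotient.mk I (hc (2 * n) (MvPolynomial.X 0) (MvPolynomial.X 1)) = 0 :=
      Ideal.Quotient.eq_zero_iff_mem.2 (Ideal.subset_span (by simp))
    simpa only [hc, map_sum, map_mul, map_pow] using this
  have h2 : hc n (Ideal.Quotient.mk I (MvPolynomial.X 0) ^ 2) (Ideal.Quotient.mk I (MvPolynomial.X 1) ^ 2) - 1 = 0 := by
    have : Ideal.Quotient.mk I (hc n (MvPolynomial.X 0 ^ 2) (MvPolynomial.X 1 ^ 2) - 1) = 0 :=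
      Ideal.Quotient.eq_zero_iff_mem.2 (Ideal.subset_span (by simp))
    simpa only [hc, map_sum, map_mul, map_pow, map_sub, map_one] using this
  obtain ⟨hx, hp⟩ := aux_rel n hn _ _ h1 h2
  have := aux_ss _ (aux_coprime n hn)
  let f : Polynomial ℂ →ₐ[ℂ] (MvPolynomial (Fin 2) ℂ ⧸ I) :=
    Polynomial.aeval (Ideal.Quotient.mk I (MvPolynomial.X 1))
  have hf : Function.Surjective f := by
    intro a
    obtain ⟨q, rfl⟩ := Ideal.Quotient.mk_surjective a
    change Ideal.Quotient.mk I q ∈ f.range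
    induction q using MvPolynomial.induction_on with
    | C c => exact f.range.algebraMap_mem c
    | add p q hp hq => rw [map_add]; exact add_mem hp hq
    | mul_X p i hp =>
      rw [map_mul]
      refine mul_mem hp ?_
      have hy : Ideal.Quotient.mk I (MvPolynomial.X 1) ∈ f.range :=
        ⟨Polynomial.X, Polynomial.aeval_X _⟩
      fin_cases i
      · change Ideal.Quotient.mk I (MvPolynomial.X 0) ∈ f.range
        rw [hx]
        exact sub_mem (pow_mem hy _) hy
      · exact hy
  refine RingHom.isSemisimpleRing_of_surjective
    (Ideal.Quotient.lift (Ideal.span {(((Polynomial.X ^ (2*n) - 1) ^ (2*n+1) - 1 : Polynomial ℂ))}) f.toRingHom ?_)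
    (Ideal.Quotient.lift_surjective_of_surjective _ _ hf)
  intro a ha
  obtain ⟨b, rfl⟩ := Ideal.mem_span_singleton.1 ha
  change f _ = 0
  rw [map_mul]
  have : f ((Polynomial.X ^ (2*n) - 1) ^ (2*n+1) - 1) = 0 := by
    simpa [f] using hp
  rw [this, zero_mul]
end

section
/- Let n ≥ 2. In the polynomial ring ℤ[a₁,…,a_{2n−1}], the determinant d_{2n+1} lies in the ideal generated by the elements d₃, d₄, …, d_{2n} together with b_n. -/
/-- The sequence `a₀ = 1, a₁, …, a_d` (and `0` otherwise) in `ℤ[a₁,…,a_d]`. -/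
noncomputable def aseq (d : ℕ) (k : ℤ) : MvPolynomial (Fin d) ℤ :=
  if h : 1 ≤ k ∧ k ≤ d then MvPolynomial.X ⟨(k - 1).toNat, by omega⟩
  else if k = 0 then 1 else 0

/-- `d_r := det((a_{1+j−i})_{1≤i,j≤r})` in `ℤ[a₁,…,a_d]`, with `d₀ = 1`. -/
noncomputable def dr (d r : ℕ) : MvPolynomial (Fin d) ℤ :=
  Matrix.det (Matrix.of fun i j : Fin r => aseq d (1 + ((j : ℕ) : ℤ) - ((i : ℕ) : ℤ)))

/-- `b_r := a_r² + 2∑_{i≥1} (−1)^i a_{r+i} a_{r−i}` in `ℤ[a₁,…,a_d]` (the sum is finite: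
all terms with `i > 2d` vanish). -/
noncomputable def bpoly (d r : ℕ) : MvPolynomial (Fin d) ℤ :=
  aseq d r ^ 2 +
    2 * ∑ i ∈ Finset.Icc 1 (2 * d),
      (-1 : MvPolynomial (Fin d) ℤ) ^ i * (aseq d ((r : ℤ) + i) * aseq d ((r : ℤ) - i))

lemma aux_neg (d : ℕ) (k : ℤ) (hk : k < 0) : aseq d k = 0 := by
  unfold aseq
  rw [dif_neg (by omega), if_neg (by omega)]

lemma aux_big (d : ℕ) (k : ℤ) (hk : (d : ℤ) < k) : aseq d k = 0 := by
  unfold aseq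
  rw [dif_neg (by omega), if_neg (by omega)]

lemma aux_zero (d : ℕ) : aseq d 0 = 1 := by
  unfold aseq
  rw [dif_neg (by omega), if_pos rfl]

/-- inverse series coefficients are the determinants -/
lemma aux_det (d r : ℕ) (e : ℕ → MvPolynomial (Fin d) ℤ)
    (he : ∀ m : ℕ, ∑ p ∈ Finset.HasAntidiagonal.antidiagonal m, aseq d (p.1 : ℤ) * e p.2 = if m = 0 then 1 else 0) :
    e r = (-1) ^ r * dr d r := by
  let U : Matrix (Fin (r + 1)) (Fin (r + 1)) (MvPolynomial (Fin d) ℤ) :=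
    Matrix.of fun i j => aseq d (((j : ℕ) : ℤ) - ((i : ℕ) : ℤ))
  let v : Fin (r + 1) → MvPolynomial (Fin d) ℤ := fun j => e (r - j)
  have hdet : U.det = 1 := by
    rw [Matrix.det_of_isUpperTriangular]
    · simp [U, aux_zero]
    · intro i j hij
      have : (j : ℕ) < (i : ℕ) := hij
      exact aux_neg _ _ (by omega)
  have hUv : U.mulVec v = Pi.single (Fin.last r) 1 := by
    funext i
    have h1 : U.mulVec v i = ∑ j ∈ Finset.range (r + 1), aseq d ((j : ℤ) - ((i : ℕ) : ℤ)) * e (r - j) := by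
      rw [Finset.sum_range]
      rfl
    have hi : (i : ℕ) ≤ r := by omega
    rw [h1]
    obtain ⟨m, hm⟩ := Nat.exists_eq_add_of_le hi
    have h2 : r + 1 = (i : ℕ) + (m + 1) := by omega
    rw [show Finset.range (r + 1) = Finset.range ((i : ℕ) + (m + 1)) from congrArg _ h2,
      Finset.sum_range_add, Finset.sum_eq_zero, zero_add]
    · have h3 := he m
      rw [Finset.Nat.sum_antidiagonal_eq_sum_range_succ (fun a b => aseq d (a : ℤ) * e b)] at h3
      have h4 : ∑ x ∈ Finset.range (m + 1), aseq d (((((i : ℕ) + x : ℕ)) : ℤ) - ((i : ℕ) : ℤ)) * e (r - ((i : ℕ) + x))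
          = ∑ k ∈ Finset.range (m + 1), aseq d (k : ℤ) * e (m - k) := by
        refine Finset.sum_congr rfl fun x _ => ?_
        congr 2
        · push_cast; ring
        · omega
      rw [h4]
      refine h3.trans ?_
      by_cases hm0 : m = 0
      · have : i = Fin.last r := by ext; simp; omega
        simp [hm0, this]
      · have : i ≠ Fin.last r := by
          intro h; rw [h] at hm; simp at hm; exact hm0 hm
        simp [hm0, this]
    · intro x hx
      rw [aux_neg, zero_mul]
      have := Finset.mem_range.1 hx
      omega
  have h5 : v = U.adjugate.mulVec (Pi.single (Fin.last r) 1) := by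
    rw [← hUv, Matrix.mulVec_mulVec, Matrix.adjugate_mul, hdet, one_smul, Matrix.one_mulVec]
  have h6 := congrFun h5 0
  rw [Matrix.mulVec_single_one] at h6
  simp only [Matrix.col_apply, Matrix.adjugate_fin_succ_eq_det_submatrix] at h6
  have h7 : v 0 = e r := by simp [v]
  rw [← h7, h6]
  simp only [Fin.val_last, Fin.val_zero, add_zero]
  unfold dr
  congr 2
  refine Matrix.ext fun i j => ?_
  simp only [U, Matrix.submatrix_apply, Matrix.of_apply, Fin.succAbove_last, Fin.succAbove_zero,
    Fin.val_succ, Fin.val_castSucc]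
  congr 1
  push_cast; ring

lemma aux_fold {R : Type*} [CommRing R] (f : ℕ → R) (n : ℕ) :
    ∑ j ∈ Finset.range (2 * n + 1), f j
      = f n + ∑ i ∈ Finset.Icc 1 n, (f (n + i) + f (n - i)) := by
  have h0 : 2 * n + 1 = n + (n + 1) := by ring
  have h1 : ∑ i ∈ Finset.Icc 1 n, (f (n + i) + f (n - i))
      = ∑ i ∈ Finset.range n, (f (n + (i + 1)) + f (n - 1 - i)) := by
    rw [Finset.range_eq_Ico, ← Finset.Ico_add_one_right_eq_Icc,
      Finset.sum_Ico_eq_sum_range, Finset.range_eq_Ico]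
    refine Finset.sum_congr (by simp) fun x _ => ?_
    rw [add_comm 1 x, show n - (x + 1) = n - 1 - x by omega]
  rw [h0, Finset.sum_range_add, Finset.sum_range_succ', h1, Finset.sum_add_distrib,
    Finset.sum_range_reflect]
  simp only [add_zero]
  ring

lemma aux_b (d n : ℕ) (hn : n ≤ 2 * d) :
    ∑ p ∈ Finset.HasAntidiagonal.antidiagonal (2 * n), aseq d (p.1 : ℤ) * ((-1) ^ p.2 * aseq d (p.2 : ℤ))
      = (-1) ^ n * bpoly d n := by
  rw [Finset.Nat.sum_antidiagonal_eq_sum_range_succ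
    (fun a b => aseq d (a : ℤ) * ((-1) ^ b * aseq d (b : ℤ)))]
  rw [aux_fold]
  have h : ∑ i ∈ Finset.Icc 1 (2 * d),
      (-1 : MvPolynomial (Fin d) ℤ) ^ i * (aseq d ((n : ℤ) + i) * aseq d ((n : ℤ) - i))
      = ∑ i ∈ Finset.Icc 1 n,
      (-1 : MvPolynomial (Fin d) ℤ) ^ i * (aseq d ((n : ℤ) + i) * aseq d ((n : ℤ) - i)) := by
    symm
    apply Finset.sum_subset
    · exact Finset.Icc_subset_Icc le_rfl hn
    · intro x hx hx'
      simp only [Finset.mem_Icc] at hx hx'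
      rw [aux_neg d ((n : ℤ) - x) (by omega)]
      ring
  unfold bpoly
  rw [h, mul_add, Finset.mul_sum, Finset.mul_sum]
  congr 1
  · rw [show 2 * n - n = n by omega]; ring
  · refine Finset.sum_congr rfl fun i hi => ?_
    simp only [Finset.mem_Icc] at hi
    obtain ⟨m, rfl⟩ := Nat.exists_eq_add_of_le hi.2
    rw [show 2 * (i + m) - (i + m + i) = m by omega, show i + m - i = m by omega,
      show 2 * (i + m) - m = m + 2 * i by omega]
    have e1 : (((i + m : ℕ) : ℤ) - i) = (m : ℤ) := by push_cast; ring
    have e2 : (((i + m : ℕ) : ℤ) + i) = ((m + 2 * i : ℕ) : ℤ) := by push_cast; ring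
    rw [e1, e2, show i + m + i = m + 2 * i by omega]
    have e3 : (-1 : MvPolynomial (Fin d) ℤ) ^ (m + 2 * i) = (-1) ^ m := by
      rw [pow_add, pow_mul]; simp
    have e4 : (-1 : MvPolynomial (Fin d) ℤ) ^ (i + m) * (2 * ((-1) ^ i * (aseq d ((m + 2 * i : ℕ) : ℤ) * aseq d (m : ℤ)))) = (-1) ^ (m + 2 * i) * (2 * (aseq d ((m + 2 * i : ℕ) : ℤ) * aseq d (m : ℤ))) := by ring
    rw [e4, e3]
    ring

theorem stmt_11 (n : ℕ) (hn : 2 ≤ n) :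
    dr (2 * n - 1) (2 * n + 1) ∈
      Ideal.span
        (insert (bpoly (2 * n - 1) n) ((fun r => dr (2 * n - 1) r) '' Set.Icc 3 (2 * n))) := by
  have hd : ∃ d, d = 2 * n - 1 := ⟨_, rfl⟩
  obtain ⟨d, hd⟩ := hd
  rw [← hd]
  set I := Ideal.span
        (insert (bpoly d n) ((fun r => dr d r) '' Set.Icc 3 (2 * n))) with hI
  let A : PowerSeries (MvPolynomial (Fin d) ℤ) := PowerSeries.mk fun k => aseq d (k : ℤ)
  let E := PowerSeries.invOfUnit A 1
  have hAE : A * E = 1 := PowerSeries.mul_invOfUnit A 1 (by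
    simp [A, ← PowerSeries.coeff_zero_eq_constantCoeff_apply, aux_zero])
  have hE : ∀ r, PowerSeries.coeff r E = (-1) ^ r * dr d r := by
    intro r
    refine aux_det d r (fun k => PowerSeries.coeff k E) fun m => ?_
    have := congrArg (PowerSeries.coeff m) hAE
    rw [PowerSeries.coeff_mul, PowerSeries.coeff_one] at this
    simpa [A] using this
  let A' := PowerSeries.rescale (-1) A
  let P := A * A'
  have hPE : P * E = A' := by
    calc P * E = (A * E) * A' := by simp only [P]; ring
      _ = A' := by rw [hAE, one_mul]
  have hP0 : PowerSeries.coeff 0 P = 1 := by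
    simp [P, A, A', PowerSeries.coeff_mul, PowerSeries.coeff_rescale, aux_zero]
  have hPn : PowerSeries.coeff (2 * n) P = (-1) ^ n * bpoly d n := by
    rw [← aux_b d n (by omega)]
    simp [P, A, A', PowerSeries.coeff_mul, PowerSeries.coeff_rescale]
  have hPsym : PowerSeries.rescale (-1) P = P := by
    have : PowerSeries.rescale (-1) A' = A := by
      ext1 k
      simp only [A', PowerSeries.coeff_rescale]
      rw [← mul_assoc, ← mul_pow]; simp
    simp only [P, map_mul]
    rw [this, mul_comm]
  have hPodd : ∀ k, Odd k → PowerSeries.coeff k P = 0 := by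
    intro k hk
    have := congrArg (PowerSeries.coeff k) hPsym
    rw [PowerSeries.coeff_rescale, hk.neg_one_pow] at this
    have h2 : (2 : MvPolynomial (Fin d) ℤ) * PowerSeries.coeff k P = 0 := by linear_combination -this
    exact (mul_eq_zero.1 h2).resolve_left two_ne_zero
  have key := congrArg (PowerSeries.coeff (2 * n + 1)) hPE
  rw [PowerSeries.coeff_mul] at key
  have hA' : PowerSeries.coeff (2 * n + 1) A' = 0 := by
    simp only [A', A, PowerSeries.coeff_rescale, PowerSeries.coeff_mk]
    rw [aux_big d _ (by push_cast; omega), mul_zero]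
  rw [hA', ← Finset.add_sum_erase _ _ (show ((0, 2 * n + 1) : ℕ × ℕ) ∈ _ by simp), hP0, one_mul, hE] at key
  have hmem : ∑ p ∈ (Finset.HasAntidiagonal.antidiagonal (2 * n + 1)).erase (0, 2 * n + 1),
      PowerSeries.coeff p.1 P * PowerSeries.coeff p.2 E ∈ I := by
    refine Ideal.sum_mem _ fun p hp => ?_
    obtain ⟨i, j⟩ := p
    simp only [Finset.mem_erase, Finset.HasAntidiagonal.mem_antidiagonal, ne_eq, Prod.mk.injEq] at hp
    obtain ⟨h1, h2⟩ := hp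
    rcases Nat.even_or_odd i with hi | hi
    · by_cases hin : i = 2 * n
      · simp only [hin, hPn]
        refine Ideal.mul_mem_right _ _ (Ideal.mul_mem_left _ _ ?_)
        exact Ideal.subset_span (Set.mem_insert _ _)
      · simp only [hE]
        refine Ideal.mul_mem_left _ _ (Ideal.mul_mem_left _ _ ?_)
        refine Ideal.subset_span (Set.mem_insert_of_mem _ ⟨j, ?_, rfl⟩)
        obtain ⟨t, ht⟩ := hi
        simp only [Set.mem_Icc]
        omega
    · simp only [hPodd i hi, zero_mul]
      exact I.zero_mem
  have hodd : Odd (2 * n + 1) := ⟨n, rfl⟩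
  rw [hodd.neg_one_pow] at key
  have : dr d (2 * n + 1) = ∑ p ∈ (Finset.HasAntidiagonal.antidiagonal (2 * n + 1)).erase (0, 2 * n + 1),
      PowerSeries.coeff p.1 P * PowerSeries.coeff p.2 E := by
    linear_combination -key
  rw [this]
  exact hmem
end
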